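/- arXiv:cs/0507013 — 2 statements merged into one kernel-verified Lean document; each statement's English description precedes it below -/
import Mathlib

section
/- Let S and T be finite sets of real numbers with S ∩ T = ∅ and |S| > |T| ≥ 1. There exists a subset R ⊆ S with |R| = |S| − |T| such that the assignment A_R has minimum cost among all assignments from S to T, and such that for every k with 1 ≤ k ≤ |S| − |T|, the k-th smallest element r_k of R satisfies H(r_k) = k. -/
open Finset

/-- An assignment from `S` to `T`: every point of `S` maps to a point of `T`, and
every point of `T` is hit. -/
def IsAssignment (S T : Finset ℝ) (A : ℝ → ℝ) : Prop :=
  (∀ s ∈ S, A s ∈ T) ∧ ∀ t ∈ T, ∃ s ∈ S, A s = t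

/-- The height function `H(x) = |{s ∈ S : s ≤ x}| − |{t ∈ T : t ≤ x}|`. -/
noncomputable def heightFn (S T : Finset ℝ) (x : ℝ) : ℤ :=
  ((S.filter (fun s => s ≤ x)).card : ℤ) - ((T.filter (fun t => t ≤ x)).card : ℤ)

/-- `N` assigns to each point of `S` a nearest neighbor in `T`. -/
def IsNearestNeighbor (S T : Finset ℝ) (N : ℝ → ℝ) : Prop :=
  ∀ s ∈ S, N s ∈ T ∧ ∀ t ∈ T, |s - N s| ≤ |s - t|

/-- `A` is the assignment `A_R`: it maps each `r ∈ R` to its nearest neighbor `N r`,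
and maps the `k`-th smallest element of `S \ R` to the `k`-th smallest element of
`T`. -/
def IsAR (S T R : Finset ℝ) (N A : ℝ → ℝ) : Prop :=
  (∀ r ∈ R, A r = N r) ∧
  ∃ h : (S \ R).card = T.card,
    ∀ k : Fin T.card, A ((S \ R).orderEmbOfFin h k) = T.orderEmbOfFin rfl k


/-- Replacing a value of the minimiser by an unused point cannot help, so `r` cannot lie weakly
between `e k` and `t k`. -/
lemma dist_swap_aux {a r t da dr : ℝ} (hd : da ≤ dr + |a - r|)
    (hb : (a < r ∧ r ≤ t) ∨ (t ≤ r ∧ r < a)) :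
    |r - t| - dr ≤ |a - t| - da ∧ (r - t) ^ 2 < (a - t) ^ 2 := by
  rcases hb with ⟨h1, h2⟩ | ⟨h1, h2⟩
  · rw [abs_of_neg (by linarith)] at hd
    rw [abs_of_nonpos (by linarith : r - t ≤ 0), abs_of_neg (by linarith : a - t < 0)]
    exact ⟨by linarith, by nlinarith⟩
  · rw [abs_of_pos (by linarith)] at hd
    rw [abs_of_nonneg (by linarith : 0 ≤ r - t), abs_of_pos (by linarith : 0 < a - t)]
    exact ⟨by linarith, by nlinarith⟩

/-- Uncrossing two matched pairs. -/
lemma uncross_aux {a b t u : ℝ} (hab : b < a) (htu : t < u) :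
    |b - t| + |a - u| ≤ |a - t| + |b - u| ∧
      (b - t) ^ 2 + (a - u) ^ 2 < (a - t) ^ 2 + (b - u) ^ 2 := by
  constructor
  · rcases abs_cases (b - t) with h1 | h1 <;> rcases abs_cases (a - u) with h2 | h2 <;>
    rcases abs_cases (a - t) with h3 | h3 <;> rcases abs_cases (b - u) with h4 | h4 <;> linarith
  · nlinarith [mul_pos (sub_pos.2 hab) (sub_pos.2 htu)]

lemma sum_update_aux {n : ℕ} (e : Fin n → ℝ) (k : Fin n) (r : ℝ) (F : Fin n → ℝ → ℝ) :
    ∑ i, F i (Function.update e k r i) = ∑ i, F i (e i) + (F k r - F k (e k)) := by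
  have h : ∀ i, F i (Function.update e k r i)
      = F i (e i) + (if i = k then F k r - F k (e k) else 0) := by
    intro i
    by_cases h : i = k
    · subst h; simp
    · simp [h]
  rw [Finset.sum_congr rfl (fun i _ => h i), Finset.sum_add_distrib]
  simp

lemma exists_good_embedding (S : Finset ℝ) (n : ℕ) (hn : n ≤ S.card) (t : Fin n → ℝ)
    (ht : StrictMono t) (d : ℝ → ℝ)
    (hd : ∀ a ∈ S, ∀ r ∈ S, d a ≤ d r + |a - r|) :
    ∃ e : Fin n → ℝ, (∀ k, e k ∈ S) ∧ StrictMono e ∧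
      (∀ e' : Fin n → ℝ, (∀ k, e' k ∈ S) → Function.Injective e' →
        ∑ k, (|e k - t k| - d (e k)) ≤ ∑ k, (|e' k - t k| - d (e' k))) ∧
      (∀ r ∈ S, (∀ k, e k ≠ r) → ∀ k, e k ≤ r ↔ t k ≤ r) := by
  classical
  let P : Finset (Fin n → ℝ) := (Fintype.piFinset (fun _ => S)).filter Function.Injective
  have hP : ∀ e, e ∈ P ↔ (∀ k, e k ∈ S) ∧ Function.Injective e := by
    intro e; simp [P]
  let g : (Fin n → ℝ) → ℝ := fun e => ∑ k, (|e k - t k| - d (e k))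
  let q : (Fin n → ℝ) → ℝ := fun e => ∑ k, (e k - t k) ^ 2
  have hne : P.Nonempty := by
    refine ⟨fun k => S.orderEmbOfFin rfl (Fin.castLE hn k), (hP _).2 ⟨fun k => ?_, ?_⟩⟩
    · exact Finset.orderEmbOfFin_mem _ _ _
    · intro i j h
      exact Fin.castLE_injective hn ((S.orderEmbOfFin rfl).injective h)
  obtain ⟨e, heP, hmin⟩ := P.exists_min_image (fun e => toLex (g e, q e)) hne
  obtain ⟨heS, hinj⟩ := (hP e).1 heP
  have hg : ∀ e' ∈ P, g e ≤ g e' := by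
    intro e' he'
    have := hmin e' he'
    rw [Prod.Lex.toLex_le_toLex] at this
    rcases this with h | h
    · exact h.le
    · exact h.1.le
  have hq : ∀ e' ∈ P, g e' ≤ g e → ¬ q e' < q e := by
    intro e' he' h1 h2
    have := hmin e' he'
    rw [Prod.Lex.toLex_le_toLex] at this
    rcases this with h | h
    · exact absurd h1 (not_le.2 h)
    · exact absurd h2 (not_lt.2 h.2)
  refine ⟨e, heS, ?_, fun e' h1 h2 => hg e' ((hP _).2 ⟨h1, h2⟩), ?_⟩
  · intro i j hij
    by_contra hcon
    have hlt : e j < e i :=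
      lt_of_le_of_ne (not_lt.1 hcon) (fun h => hij.ne' (hinj h))
    have hu := uncross_aux hlt (ht hij)
    have hmem : e ∘ Equiv.swap i j ∈ P :=
      (hP _).2 ⟨fun k => heS _, hinj.comp (Equiv.swap i j).injective⟩
    have key : ∀ F : Fin n → ℝ → ℝ, ∑ k, F k ((e ∘ Equiv.swap i j) k)
        = ∑ k, F k (e k) + (F i (e j) + F j (e i) - F i (e i) - F j (e j)) := by
      intro F
      have h0 : e ∘ Equiv.swap i j = Function.update (Function.update e i (e j)) j (e i) := by
        funext k
        by_cases hkj : k = j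
        · subst hkj; simp
        · by_cases hki : k = i
          · subst hki; simp [hkj]
          · simp [hkj, hki, Equiv.swap_apply_of_ne_of_ne hki hkj]
      rw [h0, sum_update_aux, sum_update_aux, Function.update_of_ne hij.ne']
      ring
    refine hq _ hmem ?_ ?_
    · have := key (fun k x => |x - t k| - d x)
      simp only [g]
      linarith [hu.1]
    · have := key (fun k x => (x - t k) ^ 2)
      simp only [q]
      linarith [hu.2]
  · intro r hr hrne k
    by_contra hcon
    have hb : (e k < r ∧ r ≤ t k) ∨ (t k ≤ r ∧ r < e k) := by
      have := hrne k
      rcases lt_or_gt_of_ne this with h | h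
      · left
        refine ⟨h, ?_⟩
        by_contra h'
        exact hcon ⟨fun _ => (not_le.1 h').le, fun _ => h.le⟩
      · right
        refine ⟨?_, h⟩
        by_contra h'
        exact hcon ⟨fun h2 => absurd h2 (not_le.2 h), fun h2 => absurd h2 h'⟩
    have hs := dist_swap_aux (hd _ (heS k) r hr) hb
    have hmem : Function.update e k r ∈ P := by
      refine (hP _).2 ⟨fun i => ?_, ?_⟩
      · by_cases h : i = k
        · subst h; simpa using hr
        · simpa [h] using heS i
      · intro i j h
        by_cases hi : i = k <;> by_cases hj : j = k
        · rw [hi, hj]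
        · subst hi; simp [hj] at h; exact absurd h.symm (hrne j)
        · subst hj; simp [hi] at h; exact absurd h (hrne i)
        · simp [hi, hj] at h; exact hinj h
    refine hq _ hmem ?_ ?_
    · have := sum_update_aux e k r (fun k x => |x - t k| - d x)
      simp only [g]
      linarith [hs.1]
    · have := sum_update_aux e k r (fun k x => (x - t k) ^ 2)
      simp only [q]
      linarith [hs.2]

/-- The number of elements of a finset up to its `k`-th element. -/
lemma card_filter_le_orderEmb (R : Finset ℝ) (n : ℕ) (h : R.card = n) (k : Fin n) :
    (R.filter (fun x => x ≤ R.orderEmbOfFin h k)).card = (k : ℕ) + 1 := by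
  have : R.filter (fun x => x ≤ R.orderEmbOfFin h k)
      = (Finset.Iic k).map (R.orderEmbOfFin h).toEmbedding := by
    ext x
    simp only [Finset.mem_filter, Finset.mem_map, Finset.mem_Iic]
    constructor
    · rintro ⟨hx, hle⟩
      have : x ∈ Set.range (R.orderEmbOfFin h) := by
        rw [Finset.range_orderEmbOfFin]; exact hx
      obtain ⟨i, rfl⟩ := this
      exact ⟨i, (R.orderEmbOfFin h).le_iff_le.1 hle, rfl⟩
    · rintro ⟨i, hi, rfl⟩
      exact ⟨Finset.orderEmbOfFin_mem _ _ _, (R.orderEmbOfFin h).le_iff_le.2 hi⟩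
  rw [this, Finset.card_map, Fin.card_Iic]

/-- there exists `R ⊆ S` with `|R| = |S| − |T|` such that `A_R` is a
minimum-cost assignment from `S` to `T` and the `k`-th smallest element `r_k` of `R`
satisfies `H(r_k) = k`. -/
theorem exists_R_min_cost_with_heights (S T : Finset ℝ)
    (hdisj : Disjoint S T) (hST : T.card < S.card) (hT : 1 ≤ T.card)
    (N : ℝ → ℝ) (hN : IsNearestNeighbor S T N) :
    ∃ (R : Finset ℝ) (A : ℝ → ℝ) (hcard : R.card = S.card - T.card),
      R ⊆ S ∧ IsAR S T R N A ∧
      (∀ A' : ℝ → ℝ, IsAssignment S T A' →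
        ∑ s ∈ S, |s - A s| ≤ ∑ s ∈ S, |s - A' s|) ∧
      ∀ k : Fin (S.card - T.card),
        heightFn S T (R.orderEmbOfFin hcard k) = (k : ℤ) + 1 := by
  classical
  set t : Fin T.card → ℝ := fun k => T.orderEmbOfFin rfl k with ht
  have htm : StrictMono t := (T.orderEmbOfFin rfl).strictMono
  have htT : ∀ k, t k ∈ T := fun k => Finset.orderEmbOfFin_mem _ _ _
  obtain ⟨e, heS, hem, hmin, hh⟩ := exists_good_embedding S T.card hST.le t htm
    (fun s => |s - N s|) (by
      intro a ha r hr
      have h1 := (hN a ha).2 (N r) (hN r hr).1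
      have h2 := abs_sub_le a r (N r)
      linarith)
  have hinj := hem.injective
  set I : Finset ℝ := Finset.univ.image e with hI
  have hIS : I ⊆ S := by
    intro x hx
    obtain ⟨k, _, rfl⟩ := Finset.mem_image.1 hx
    exact heS k
  have hIc : I.card = T.card := by
    rw [hI, Finset.card_image_of_injective _ hinj]; simp
  have hSR : S \ (S \ I) = I := by
    rw [Finset.sdiff_sdiff_eq_self hIS]
  have hcard : (S \ I).card = S.card - T.card := by
    rw [Finset.card_sdiff_of_subset hIS, hIc]
  let A : ℝ → ℝ := fun s => if h : ∃ k, e k = s then t h.choose else N s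
  have hA1 : ∀ k, A (e k) = t k := by
    intro k
    have h : ∃ j, e j = e k := ⟨k, rfl⟩
    simp only [A, dif_pos h]
    rw [hinj h.choose_spec]
  have hA2 : ∀ s, s ∉ I → A s = N s := by
    intro s hs
    have h : ¬ ∃ k, e k = s := by
      rintro ⟨k, rfl⟩
      exact hs (Finset.mem_image_of_mem _ (Finset.mem_univ _))
    simp only [A, dif_neg h]
  refine ⟨S \ I, A, hcard, Finset.sdiff_subset, ⟨?_, ?_⟩, ?_, ?_⟩
  · intro r hr
    exact hA2 r (Finset.mem_sdiff.1 hr).2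
  · refine ⟨by rw [hSR, hIc], fun k => ?_⟩
    have hu : e = (S \ (S \ I)).orderEmbOfFin (by rw [hSR, hIc]) := by
      apply Finset.orderEmbOfFin_unique
      · intro x
        rw [hSR]
        exact Finset.mem_image_of_mem _ (Finset.mem_univ _)
      · exact hem
    rw [← hu, hA1]
  · intro A' hA'
    have hex : ∀ k, ∃ s ∈ S, A' s = t k := fun k => hA'.2 _ (htT k)
    choose e' he'S he'A using hex
    have he'inj : Function.Injective e' := by
      intro i j h
      apply htm.injective
      rw [← he'A, ← he'A, h]
    have h1 := hmin e' he'S he'inj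
    have h2 : ∑ k, (|e k - t k| - |e k - N (e k)|) = ∑ s ∈ S, (|s - A s| - |s - N s|) := by
      rw [← Finset.sum_subset hIS, hI, Finset.sum_image (fun _ _ _ _ h => hinj h)]
      · simp only [hA1]
      · intro x _ hx
        rw [hA2 x hx, sub_self]
    have h3 : ∑ k, (|e' k - t k| - |e' k - N (e' k)|)
        ≤ ∑ s ∈ S, (|s - A' s| - |s - N s|) := by
      calc ∑ k, (|e' k - t k| - |e' k - N (e' k)|)
          = ∑ s ∈ Finset.univ.image e', (|s - A' s| - |s - N s|) := by
            rw [Finset.sum_image (fun _ _ _ _ h => he'inj h)]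
            simp only [he'A]
        _ ≤ _ := by
            apply Finset.sum_le_sum_of_subset_of_nonneg
            · intro x hx
              obtain ⟨k, _, rfl⟩ := Finset.mem_image.1 hx
              exact he'S k
            · intro s hs _
              exact sub_nonneg.2 ((hN s hs).2 _ (hA'.1 s hs))
    rw [Finset.sum_sub_distrib (s := S)] at h3
    have h4 := h2
    rw [Finset.sum_sub_distrib (s := S)] at h4
    linarith
  · intro k
    have hc := card_filter_le_orderEmb (S \ I) _ hcard k
    have hrm : (S \ I).orderEmbOfFin hcard k ∈ S \ I := Finset.orderEmbOfFin_mem _ _ _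
    generalize (S \ I).orderEmbOfFin hcard k = r at hc hrm
    obtain ⟨hrS, hrI⟩ := Finset.mem_sdiff.1 hrm
    have hiff := hh r hrS (fun k h => hrI (h ▸ Finset.mem_image_of_mem _ (Finset.mem_univ _)))
    have hTi : T = Finset.univ.image t := by
      ext x
      have := Finset.range_orderEmbOfFin T rfl
      simp only [Finset.mem_image, Finset.mem_univ, true_and]
      rw [← Finset.mem_coe, ← this]
      rfl
    have hT1 : (T.filter (fun x => x ≤ r)).card = (Finset.univ.filter (fun k => t k ≤ r)).card := by
      conv_lhs => rw [hTi]
      rw [Finset.filter_image, Finset.card_image_of_injective _ htm.injective]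
    have hI1 : (I.filter (fun x => x ≤ r)).card = (Finset.univ.filter (fun k => e k ≤ r)).card := by
      rw [hI, Finset.filter_image, Finset.card_image_of_injective _ hinj]
    have hS1 : (S.filter (fun x => x ≤ r)).card
        = ((S \ I).filter (fun x => x ≤ r)).card + (I.filter (fun x => x ≤ r)).card := by
      rw [← Finset.card_union_of_disjoint, ← Finset.filter_union,
        Finset.sdiff_union_of_subset hIS]
      exact Finset.disjoint_filter_filter Finset.sdiff_disjoint
    have hEq : (Finset.univ.filter (fun k => e k ≤ r)) = Finset.univ.filter (fun k => t k ≤ r) := by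
      ext k; simp [hiff k]
    unfold heightFn
    rw [hS1, hT1, hI1, hEq, hc]
    push_cast
    ring
end

section
/- Let S and T be finite sets of real numbers with S ∩ T = ∅ and |S| > |T| ≥ 1, and let m = max(S ∪ T). Let s', s ∈ S and t ∈ T with s' < t < s, let k be an integer, and suppose H(x) ≥ k for all x ∈ [s', t) and H(x) < k for all x ∈ [t, s). Then ∫_{s'}^{m} h^{k}(x) dx = ∫_{s}^{m} h^{k}(x) dx + (t − s') − (s − t). -/
open Finset MeasureTheory

/-- The relative height `h^k(x)`: `1` if `H(x) ≥ k` and `−1` otherwise. -/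
noncomputable def relHeight (S T : Finset ℝ) (k : ℤ) (x : ℝ) : ℝ :=
  if k ≤ heightFn S T x then 1 else -1

theorem measurable_cardFilter (S : Finset ℝ) :
    Measurable (fun x : ℝ => ((S.filter (fun s => s ≤ x)).card : ℤ)) := by
  apply Monotone.measurable
  intro a b hab
  have : S.filter (fun s => s ≤ a) ⊆ S.filter (fun s => s ≤ b) :=
    Finset.monotone_filter_right S (fun x _ hx => le_trans hx hab)
  exact Int.ofNat_le.mpr (Finset.card_le_card this)

theorem measurable_relHeight (S T : Finset ℝ) (k : ℤ) : Measurable (relHeight S T k) := by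
  have h : Measurable (heightFn S T) := (measurable_cardFilter S).sub (measurable_cardFilter T)
  exact Measurable.ite (measurableSet_le measurable_const h) measurable_const measurable_const

theorem intervalIntegrable_relHeight (S T : Finset ℝ) (k : ℤ) (a b : ℝ) :
    IntervalIntegrable (relHeight S T k) volume a b := by
  apply (intervalIntegrable_const (c := (1 : ℝ))).mono_fun
    (measurable_relHeight S T k).aestronglyMeasurable
  refine Filter.Eventually.of_forall fun x => ?_
  show ‖relHeight S T k x‖ ≤ ‖(1 : ℝ)‖
  unfold relHeight
  split_ifs <;> simp

theorem integral_eq_of_Ico (f : ℝ → ℝ) (a b c : ℝ) (hab : a ≤ b)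
    (h : ∀ x ∈ Set.Ico a b, f x = c) : ∫ x in a..b, f x = (b - a) * c := by
  rw [intervalIntegral.integral_of_le hab, ← integral_Ico_eq_integral_Ioc,
    setIntegral_congr_fun measurableSet_Ico h, integral_Ico_eq_integral_Ioc,
    ← intervalIntegral.integral_of_le hab]
  simp

/-- if `s' < t < s` with `s', s ∈ S`, `t ∈ T`, `H(x) ≥ k` on `[s', t)`
and `H(x) < k` on `[t, s)`, then
`∫_{s'}^m h^k = ∫_s^m h^k + (t − s') − (s − t)`, where `m = max (S ∪ T)`. -/
theorem relHeight_integral_step (S T : Finset ℝ)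
    (hdisj : Disjoint S T) (hST : T.card < S.card) (hT : 1 ≤ T.card)
    (hne : (S ∪ T).Nonempty)
    (s' s t : ℝ) (hs' : s' ∈ S) (hs : s ∈ S) (ht : t ∈ T)
    (h1 : s' < t) (h2 : t < s) (k : ℤ)
    (hk1 : ∀ x ∈ Set.Ico s' t, k ≤ heightFn S T x)
    (hk2 : ∀ x ∈ Set.Ico t s, heightFn S T x < k) :
    ∫ x in s'..((S ∪ T).max' hne), relHeight S T k x =
      (∫ x in s..((S ∪ T).max' hne), relHeight S T k x) + (t - s') - (s - t) := by
  have I := intervalIntegrable_relHeight S T k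
  rw [← intervalIntegral.integral_add_adjacent_intervals (I s' t) (I t _),
    ← intervalIntegral.integral_add_adjacent_intervals (I t s) (I s _),
    integral_eq_of_Ico (relHeight S T k) s' t 1 h1.le (fun x hx => if_pos (hk1 x hx)),
    integral_eq_of_Ico (relHeight S T k) t s (-1) h2.le (fun x hx => if_neg (not_le.mpr (hk2 x hx)))]
  ring
end
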